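/- arXiv:hep-th/0605167 — 3 statements merged into one kernel-verified Lean document; each statement's English description precedes it below -/
import Mathlib

section
/- Let A be an associative ring and f, g : Fin 2 → A families of elements such that f α * f β = f β * f α for all α, β and f α * g γ = g γ * f α for all α, γ. Define the rank-one field Π α α̇ := f α * g α̇. Then the ε-square of Π vanishes: ∑_{α,β,α̇,β̇} ε α β * ε α̇ β̇ • (Π α α̇ * Π β β̇) = 0, regardless of any (anti)commutation properties among the g's. -/
/-- The 2×2 antisymmetric symbol with values in `ℤ`. -/
def eps : Fin 2 → Fin 2 → ℤ :=
  fun i j => if i = 0 ∧ j = 1 then 1 else if i = 1 ∧ j = 0 then -1 else 0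

/-- For a rank-one field `Π α α̇ = f α * g α̇` with commuting (bosonic) first factor
`f`, the ε-square `∑ ε α β * ε α̇ β̇ • (Π α α̇ * Π β β̇)` vanishes, regardless of any
(anti)commutation properties among the `g`'s. -/
theorem bosonic_factor_nilpotency
    {A : Type*} [Ring A] (f g : Fin 2 → A)
    (hff : ∀ α β, f α * f β = f β * f α)
    (hfg : ∀ α γ, f α * g γ = g γ * f α) :
    ∑ α, ∑ β, ∑ ad, ∑ bd,
      (eps α β * eps ad bd) • ((f α * g ad) * (f β * g bd)) = 0 := by
  have key : ∀ α β a b, (f α * g a) * (f β * g b) = (f β * g a) * (f α * g b) := by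
    intro α β a b
    calc (f α * g a) * (f β * g b) = f α * (g a * f β) * g b := by simp only [mul_assoc]
      _ = (f α * f β) * (g a * g b) := by rw [← hfg β a]; simp only [mul_assoc]
      _ = (f β * f α) * (g a * g b) := by rw [hff α β]
      _ = f β * (f α * g a) * g b := by simp only [mul_assoc]
      _ = (f β * g a) * (f α * g b) := by rw [hfg α a]; simp only [mul_assoc]
  simp only [Fin.sum_univ_two]
  rw [key 1 0 0 1, key 1 0 1 0]
  simp [eps]
  abel
end

section
/- Let λ : ℝ → (Fin 2 → ℂ) and x : ℝ → Matrix (Fin 2) (Fin 2) ℂ be differentiable, write λ̄ := star ∘ λ (componentwise conjugate, also differentiable), and define μ (τ) := Complex.I • (x τ *ᵥ λ τ) and μ̄ (τ) := Complex.I • ((x τ)ᵀ *ᵥ λ̄ τ). Then for every τ: λ̄ τ ⬝ᵥ (deriv μ τ) − μ̄ τ ⬝ᵥ (deriv λ τ) = Complex.I * (λ̄ τ ⬝ᵥ ((deriv x τ) *ᵥ λ τ)). Equivalently, the twistor Lagrangian λ̄ ∂_τ μ − μ̄ ∂_τ λ equals i times the Minkowski Lagrangian tr(p ∂_τ x) with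 p = vecMulVec (λ τ) (λ̄ τ). -/
open Matrix

/-- Upon imposing the incidence relations `μ = i x λ`, `μ̄ = i xᵀ λ̄`, the twistor
Lagrangian `λ̄ ∂_τ μ − μ̄ ∂_τ λ` equals `i` times the Minkowski Lagrangian
`tr(p ∂_τ x)` with `p = λ λ̄` (derivatives taken componentwise). -/
theorem twistor_action_eq_minkowski_action
    (l : ℝ → Fin 2 → ℂ) (x : ℝ → Matrix (Fin 2) (Fin 2) ℂ)
    (hl : ∀ i, Differentiable ℝ fun t => l t i)
    (hx : ∀ i j, Differentiable ℝ fun t => x t i j) (τ : ℝ) :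
    (star ∘ l τ) ⬝ᵥ (fun i => deriv (fun t => (Complex.I • (x t *ᵥ l t)) i) τ)
      - (Complex.I • ((x τ)ᵀ *ᵥ (star ∘ l τ))) ⬝ᵥ (fun i => deriv (fun t => l t i) τ)
      = Complex.I *
        ((star ∘ l τ) ⬝ᵥ ((Matrix.of fun i j => deriv (fun t => x t i j) τ) *ᵥ l τ)) := by
  have key : ∀ i, deriv (fun t => (Complex.I • (x t *ᵥ l t)) i) τ
      = Complex.I * ((deriv (fun t => x t i 0) τ * l τ 0 + x τ i 0 * deriv (fun t => l t 0) τ)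
        + (deriv (fun t => x t i 1) τ * l τ 1 + x τ i 1 * deriv (fun t => l t 1) τ)) := by
    intro i
    have h := ((((hx i 0 τ).hasDerivAt.mul (hl 0 τ).hasDerivAt).add
      ((hx i 1 τ).hasDerivAt.mul (hl 1 τ).hasDerivAt)).const_mul Complex.I)
    rw [← h.deriv]
    congr 1
    funext t
    fin_cases i <;> simp
  simp only [key]
  simp only [Matrix.mulVec, dotProduct, Fin.sum_univ_two, Function.comp, Pi.smul_apply,
    smul_eq_mul, Matrix.transpose_apply, Matrix.of_apply]
  ring
end

section
/- In the exterior algebra ExteriorAlgebra ℝ (Fin 4 → ℝ), let f α := ExteriorAlgebra.ι ℝ (Pi.single α 1) for α ∈ {0,1} and g α̇ := ExteriorAlgebra.ι ℝ (Pi.single (2 + α̇) 1) for α̇ ∈ {0,1} be images of distinct standard basis vectors, and define the doubly-fermionic rank-one field Π α α̇ := f α * g α̇. Then the ε-square ∑_{α,β,α̇,β̇} ε α β * ε α̇ β̇ • (Π α α̇ * Π β β̇) is NONZERO (it equals −4 • (f 0 * f 1 * g 0 * g 1)). Hence when both factors of Π = f g are fermionic, the nilpotency constraint Tr(Π²) =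 0 fails. -/
/-- The first pair of Grassmann generators `f 0, f 1` of `Λ(ℝ⁴)`. -/
noncomputable def f (α : Fin 2) : ExteriorAlgebra ℝ (Fin 4 → ℝ) :=
  ExteriorAlgebra.ι ℝ (Pi.single (Fin.castAdd 2 α) 1)

/-- The second pair of Grassmann generators `g 0, g 1` of `Λ(ℝ⁴)` (basis vectors
with indices `2 + α̇`). -/
noncomputable def g (αd : Fin 2) : ExteriorAlgebra ℝ (Fin 4 → ℝ) :=
  ExteriorAlgebra.ι ℝ (Pi.single (Fin.natAdd 2 αd) 1)

/-- The doubly-fermionic rank-one field `Π α α̇ = f α * g α̇`. -/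
noncomputable def PiField (α αd : Fin 2) : ExteriorAlgebra ℝ (Fin 4 → ℝ) :=
  f α * g αd

lemma iota_anticomm (x y : Fin 4 → ℝ) :
    ExteriorAlgebra.ι ℝ x * ExteriorAlgebra.ι ℝ y
      = -(ExteriorAlgebra.ι ℝ y * ExteriorAlgebra.ι ℝ x) :=
  eq_neg_of_add_eq_zero_left (ExteriorAlgebra.ι_add_mul_swap x y)

lemma top_ne_zero : f 0 * f 1 * g 0 * g 1 ≠ 0 := by
  have h : f 0 * f 1 * g 0 * g 1
      = ExteriorAlgebra.ιMulti ℝ 4 (fun i : Fin 4 => (Pi.single i 1 : Fin 4 → ℝ)) := by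
    simp [ExteriorAlgebra.ιMulti_apply, f, g, mul_assoc]
    rfl
  intro h0
  rw [h] at h0
  have h1 := congrArg (ExteriorAlgebra.liftAlternating (R := ℝ) (M := Fin 4 → ℝ) (N := ℝ)
    (Pi.single 4 (Matrix.detRowAlternating (n := Fin 4) (R := ℝ)))) h0
  rw [ExteriorAlgebra.liftAlternating_apply_ιMulti, map_zero, Pi.single_eq_same] at h1
  have h2 : (Matrix.detRowAlternating (n := Fin 4) (R := ℝ))
      (fun i : Fin 4 => (Pi.single i 1 : Fin 4 → ℝ)) = 1 := by
    have h3 : (fun i : Fin 4 => (Pi.single i 1 : Fin 4 → ℝ))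
        = (1 : Matrix (Fin 4) (Fin 4) ℝ) := by
      ext i j
      simp [Matrix.one_apply, Pi.single_apply, eq_comm]
    rw [h3]
    exact Matrix.det_one
  rw [h2] at h1
  exact one_ne_zero h1

lemma eps_square_eq :
    (∑ α, ∑ β, ∑ ad, ∑ bd,
      (eps α β * eps ad bd) • (PiField α ad * PiField β bd))
      = (-4 : ℤ) • (f 0 * f 1 * g 0 * g 1) := by
  have hgf : ∀ a b, g a * f b = -(f b * g a) := fun a b => iota_anticomm _ _
  have hff : f 1 * f 0 = -(f 0 * f 1) := iota_anticomm _ _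
  have hgg : g 1 * g 0 = -(g 0 * g 1) := iota_anticomm _ _
  have key : ∀ a b c d, PiField a b * PiField c d = -((f a * f c) * (g b * g d)) := by
    intro a b c d
    simp only [PiField]
    rw [mul_assoc, ← mul_assoc (g b), hgf]
    simp [mul_assoc]
  simp only [key, Fin.sum_univ_two, eps, hff, hgg]
  simp [mul_assoc]
  noncomm_ring

/-- When both factors of `Π = f g` are fermionic, the ε-square of `Π` equals
`−4 • (f 0 * f 1 * g 0 * g 1)` and is NONZERO: the nilpotency constraint
`Tr(Π²) = 0` fails. -/
theorem doubly_fermionic_eps_square_ne_zero :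
    (∑ α, ∑ β, ∑ ad, ∑ bd,
      (eps α β * eps ad bd) • (PiField α ad * PiField β bd))
      = (-4 : ℤ) • (f 0 * f 1 * g 0 * g 1) ∧
    (∑ α, ∑ β, ∑ ad, ∑ bd,
      (eps α β * eps ad bd) • (PiField α ad * PiField β bd)) ≠ 0 := by
  refine ⟨eps_square_eq, ?_⟩
  rw [eps_square_eq]
  intro h
  have h4 : (-4 : ℝ) • (f 0 * f 1 * g 0 * g 1) = 0 := by
    rw [← h, ← Int.cast_smul_eq_zsmul ℝ]
    norm_num
  rcases smul_eq_zero.mp h4 with h5 | h5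
  · norm_num at h5
  · exact top_ne_zero h5
end
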